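/- Let M be a 3-connected matroid with |E(M)| >= 4, and let (e_1, ..., e_n) be a fan of M. If there is an element e ∈ E(M) − {e_1, ..., e_n} and elements x, y, z ∈ {e_1, ..., e_n} such that {e, x, y} is a triangle and {e, y, z} is a triad, then M is a wheel or a whirl. -/

import Mathlib

/-!
Let `F` be the set of elements of the fan, of size `n`. Counting along the overlapping triangles
and triads gives `r(F) + r✶(F) ≤ n + 2`. The triangle and the triad through `e` put `e` into the
closure and the coclosure of `F`, so `F ∪ {e}` satisfies `r + r✶ ≤ |F ∪ {e}| + 1`, and
3-connectivity leaves at most one element outside `F ∪ {e}`.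

Up to duality the fan starts with a triad. By orthogonality the triangle `{e, x, y}` can only use
the two elements at an end of the fan, up to a reordering of a fan with at most four elements, so
`F ∪ {e}` is again the set of elements of a fan. Hence `M` has a fan missing exactly one element.
Up to duality this fan starts with a triad too. Pairs are independent and coindependent, so the rank
and the corank of `M` are attained on long segments of the fan, which bounds both; as they sum to
`|E(M)|`, the fan has odd length and both bounds are attained. Since a shorter initial segment then
has too small a corank to be cospanning, its complement is dependent, which says that the missing
element completes the fan to a longer one. Dropping the first element instead leaves another fan
missing one element, and repeating this all the way round shows that the fan is cyclic.

Finally, orthogonality with the triads of a cyclic fan determines all circuits which do not contain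
the whole rim: they consist of two spokes and an arc of the rim between them. Depending on whether
the rim is dependent or independent, `M` is a wheel or a whirl.
-/

open Matroid Set

universe u

variable {α : Type u}

namespace PaperDefs

/-- Deletion of a set of elements from a matroid. -/
def mdel (M : Matroid α) (D : Set α) : Matroid α := M ↾ (M.E \ D)

/-- Contraction of a set of elements in a matroid. -/
def mcon (M : Matroid α) (C : Set α) : Matroid α := (mdel M✶ C)✶

/-- A circuit: a minimal dependent set. -/
def IsCircuit (M : Matroid α) (C : Set α) : Prop :=
  M.Dep C ∧ ∀ X, X ⊂ C → M.Indep X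

/-- A triangle: a 3-element circuit. -/
def IsTriangle (M : Matroid α) (T : Set α) : Prop :=
  IsCircuit M T ∧ T.encard = 3

/-- A triad: a 3-element cocircuit. -/
def IsTriad (M : Matroid α) (T : Set α) : Prop := IsTriangle M✶ T

/-- The (extended natural number) rank of a set in a matroid: the supremum of the
cardinalities of its independent subsets. -/
noncomputable def erk (M : Matroid α) (X : Set α) : ℕ∞ :=
  ⨆ I ∈ {I : Set α | M.Indep I ∧ I ⊆ X}, I.encard

/-- Two elements are connected if they are equal or lie in a common circuit. -/
def ConnTo (M : Matroid α) (e f : α) : Prop :=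
  (e = f ∧ e ∈ M.E) ∨ ∃ C, IsCircuit M C ∧ e ∈ C ∧ f ∈ C

/-- A matroid is connected if its ground set is nonempty and every two of its elements
are connected. -/
def Conn (M : Matroid α) : Prop :=
  M.E.Nonempty ∧ ∀ e ∈ M.E, ∀ f ∈ M.E, ConnTo M e f

/-- A 2-separation of a matroid: a partition `(X, Y)` of the ground set with both sides
of size at least two and `r(X) + r(Y) - r(M) ≤ 1`. -/
def TwoSep (M : Matroid α) (X Y : Set α) : Prop :=
  X ∪ Y = M.E ∧ Disjoint X Y ∧ 2 ≤ X.encard ∧ 2 ≤ Y.encard ∧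
    erk M X + erk M Y ≤ erk M M.E + 1

/-- A matroid is 3-connected if it is connected and has no 2-separation. -/
def ThreeConn (M : Matroid α) : Prop :=
  Conn M ∧ ∀ X Y, ¬ TwoSep M X Y

/-- A matroid is 3-connected up to series and parallel sets if it is connected and, for
every 2-separation `(X, Y)`, `min {r X, r Y} = 1` or `min {r✶ X, r✶ Y} = 1`. -/
def ThreeConnUpToSP (M : Matroid α) : Prop :=
  Conn M ∧ ∀ X Y, TwoSep M X Y →
    min (erk M X) (erk M Y) = 1 ∨ min (erk M✶ X) (erk M✶ Y) = 1

/-- `N` is a minor of `M`: it is obtained from `M` by contracting a set `C` and deleting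
a disjoint set `D`. -/
def IsMinor (N M : Matroid α) : Prop :=
  ∃ C D, C ⊆ M.E ∧ D ⊆ M.E ∧ Disjoint C D ∧ N = mdel (mcon M C) D

/-- `M` is isomorphic to `N`: there is a bijection between the ground sets under which
independence corresponds. -/
def IsoTo (M N : Matroid α) : Prop :=
  ∃ f : α → α, Set.BijOn f M.E N.E ∧ ∀ I, I ⊆ M.E → (M.Indep I ↔ N.Indep (f '' I))

/-- The cyclic interval `{i, i+1, ..., j-1}` in `ZMod r`. -/
def cycArc (r : ℕ) (i j : ZMod r) : Set (ZMod r) :=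
  {k | ∃ m : ℕ, m < (j - i).val ∧ k = i + (m : ZMod r)}

/-- `M` is (isomorphic to) a rank-`r` wheel for some `r ≥ 2`, i.e. the cycle matroid of
the wheel graph with `r` spokes: there is a labelling of the ground set by spokes `s i`
and rim elements `w i` so that the circuits of `M` are precisely the rim together with
the sets consisting of two spokes and the rim elements of one of the two arcs joining
them. -/
def IsWheel (M : Matroid α) : Prop :=
  ∃ r : ℕ, 2 ≤ r ∧ ∃ s w : ZMod r → α,
    Function.Injective (Sum.elim s w) ∧
    M.E = Set.range s ∪ Set.range w ∧
    ∀ C, IsCircuit M C ↔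
      (C = Set.range w ∨
        ∃ i j : ZMod r, i ≠ j ∧ C = {s i, s j} ∪ w '' cycArc r i j)

/-- `M` is (isomorphic to) a rank-`r` whirl for some `r ≥ 2`: obtained from the rank-`r`
wheel by relaxing the rim circuit; its circuits are the two-spokes-plus-arc circuits of
the wheel together with the sets consisting of the whole rim and a single spoke. -/
def IsWhirl (M : Matroid α) : Prop :=
  ∃ r : ℕ, 2 ≤ r ∧ ∃ s w : ZMod r → α,
    Function.Injective (Sum.elim s w) ∧
    M.E = Set.range s ∪ Set.range w ∧
    ∀ C, IsCircuit M C ↔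
      ((∃ i : ZMod r, C = insert (s i) (Set.range w)) ∨
        ∃ i j : ZMod r, i ≠ j ∧ C = {s i, s j} ∪ w '' cycArc r i j)

/-- A triangle if `b = true`, a triad if `b = false`. -/
def TriOrTriad (M : Matroid α) (b : Bool) (T : Set α) : Prop :=
  cond b (IsTriangle M T) (IsTriad M T)

/-- The alternation pattern of a fan, recorded as a list: position `i` (zero-based)
carries a spoke element iff `fanBool b i = true`, where `b` records whether the first
triple of the fan is a triangle. -/
def fanBool (b : Bool) (i : ℕ) : Bool := if i % 2 = 0 then b else !b

/-- `F` is a fan of `M` whose first triple is a triangle if `b = true` (so that the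
first element is a spoke element) and a triad if `b = false`: a list of at least three
distinct elements of the ground set in which every three consecutive elements form
alternately triangles and triads. -/
def IsFanWith (M : Matroid α) (b : Bool) (F : List α) : Prop :=
  3 ≤ F.length ∧ F.Nodup ∧ (∀ x ∈ F, x ∈ M.E) ∧
  ∀ (l₁ : List α) (x y z : α) (l₂ : List α), F = l₁ ++ x :: y :: z :: l₂ →
    TriOrTriad M (fanBool b l₁.length) {x, y, z}

/-- `F` is a fan of `M`. -/
def IsFan (M : Matroid α) (F : List α) : Prop := ∃ b, IsFanWith M b F

/-- `F` is consistent with `F'`: `F` is a (not necessarily contiguous) subsequence of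
`F'` or of its reversal. -/
def Consistent (F F' : List α) : Prop := F.Sublist F' ∨ F.Sublist F'.reverse

/-- A finite family of lists is pairwise disjoint. -/
def PairwiseDisjointLists (𝓕 : Finset (List α)) : Prop :=
  ∀ F ∈ 𝓕, ∀ G ∈ 𝓕, F ≠ G → ∀ x ∈ F, x ∉ G

/-- `𝓕` is a covering family of `M'` relative to `N` and `FN`: a family of pairwise
disjoint fans of `M'`, of the same size as `FN`, such that every fan of `FN` is
consistent with a member of `𝓕` and every element of `E(M') - E(N)` lies in a member
of `𝓕`. -/
def CoveringFamily (N : Matroid α) (FN : Finset (List α)) (M' : Matroid α)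
    (𝓕 : Finset (List α)) : Prop :=
  (∀ F ∈ 𝓕, IsFan M' F) ∧ PairwiseDisjointLists 𝓕 ∧ 𝓕.card = FN.card ∧
  (∀ F ∈ FN, ∃ F' ∈ 𝓕, Consistent F F') ∧
  (∀ x ∈ M'.E \ N.E, ∃ F ∈ 𝓕, x ∈ F)

/-- `M` is obtained from `M'` by a fan-lengthening move on the fan `F₀` of `M'`,
producing the fan `F` of `M`: either `M' = M \ e₁` where `e₁` is a terminal spoke
element of `F`, or `M' = M / e₁` where `e₁` is a terminal rim element of `F`, or
(when `F` has at least five elements) `M' = M / eᵢ \ eᵢ₊₁` for a rim element `eᵢ`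
of `F` with `1 ≤ i ≤ n - 1`; in each case `M` and `M'` are 3-connected and `F₀` is
the corresponding shortened fan. -/
def FanLengthen (M' M : Matroid α) (F₀ F : List α) : Prop :=
  ThreeConn M ∧ 4 ≤ F.length ∧ IsFan M' F₀ ∧
  ∃ b, IsFanWith M b F ∧
    ((∃ e F', F = e :: F' ∧ b = true ∧ M' = mdel M {e} ∧ ThreeConn M' ∧ F₀ = F') ∨
     (∃ e F', F = e :: F' ∧ b = false ∧ M' = mcon M {e} ∧ ThreeConn M' ∧ F₀ = F') ∨
     (5 ≤ F.length ∧ ∃ (l₁ : List α) (x y : α) (l₂ : List α),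
        F = l₁ ++ x :: y :: l₂ ∧ fanBool b l₁.length = false ∧
        M' = mdel (mcon M {x}) {y} ∧ ThreeConn M' ∧ F₀ = l₁ ++ l₂))

/-- The fan-extensions of `N` relative to the family `FN` of fans of `N`: the smallest
collection of matroids containing `N` and closed under fan-lengthening moves performed
on fans belonging to covering families. -/
inductive FanExt (N : Matroid α) (FN : Finset (List α)) : Matroid α → Prop
  | base : FanExt N FN N
  | step (M' M : Matroid α) (𝓕 : Finset (List α)) (F₀ F : List α) :
      FanExt N FN M' → CoveringFamily N FN M' 𝓕 → F₀ ∈ 𝓕 →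
      FanLengthen M' M F₀ F → FanExt N FN M

/-- The covering family `𝓕` of `M` admits a fan-shortening move: there are a matroid
`M'` having `N` as a minor and a fan `F₀` of `M'` such that `M` is obtained from `M'`
by a fan-lengthening move on `F₀` producing a fan that belongs to `𝓕`. -/
def AdmitsFanShortening (N M : Matroid α) (𝓕 : Finset (List α)) : Prop :=
  ∃ (M' : Matroid α) (F₀ F : List α), IsMinor N M' ∧ F ∈ 𝓕 ∧ FanLengthen M' M F₀ F

/-- The alternation pattern of a fan presented as a function with one-based indices:
position `i` carries a spoke element iff `posBool b i = true`, where `b` records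
whether the first triple of the fan is a triangle. -/
def posBool (b : Bool) (i : ℕ) : Bool := if i % 2 = 1 then b else !b

/-- `(e 1, ..., e n)` is a fan of `M` whose first triple is a triangle if `b = true`
(so that `e 1` is a spoke element) and a triad if `b = false`: at least three distinct
elements of the ground set in which every three consecutive elements form alternately
triangles and triads. -/
def IsFanFun (M : Matroid α) (b : Bool) (n : ℕ) (e : ℕ → α) : Prop :=
  3 ≤ n ∧ (∀ i j, 1 ≤ i → i ≤ n → 1 ≤ j → j ≤ n → e i = e j → i = j) ∧
  (∀ i, 1 ≤ i → i ≤ n → e i ∈ M.E) ∧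
  ∀ i, 1 ≤ i → i + 2 ≤ n → TriOrTriad M (posBool b i) {e i, e (i+1), e (i+2)}

/-- The set of elements of the fan `(e 1, ..., e n)`. -/
def fanSet (n : ℕ) (e : ℕ → α) : Set α := {a | ∃ i, 1 ≤ i ∧ i ≤ n ∧ a = e i}

/-- The set of rim elements of the fan `(e 1, ..., e n)` with alternation pattern `b`. -/
def rimSet (b : Bool) (n : ℕ) (e : ℕ → α) : Set α :=
  {a | ∃ i, 1 ≤ i ∧ i ≤ n ∧ posBool b i = false ∧ a = e i}

/-- `M` is representable over the field `𝔽`. -/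
def RepOver (M : Matroid α) (𝔽 : Type*) [Field 𝔽] : Prop :=
  ∃ f : α → (α → 𝔽),
    ∀ I : Set α, I ⊆ M.E → (M.Indep I ↔ LinearIndependent 𝔽 (fun x : I => f (x : α)))

/-- `M` has a minor isomorphic to a member of `𝓢`. -/
def HasSMinor (𝓢 : Set (Matroid α)) (M : Matroid α) : Prop :=
  ∃ S ∈ 𝓢, ∃ N, IsMinor N M ∧ IsoTo N S

/-- `M` is `𝓢`-fragile: for every element `e` of `M`, at least one of `M \ e` and
`M / e` has no `𝓢`-minor. -/
def SFragile (𝓢 : Set (Matroid α)) (M : Matroid α) : Prop :=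
  ∀ e ∈ M.E, ¬ HasSMinor 𝓢 (mdel M {e}) ∨ ¬ HasSMinor 𝓢 (mcon M {e})

end PaperDefs

open PaperDefs

namespace PaperDefs

variable {M : Matroid α}

/-! ### Rank and closure -/

lemma erk_eq_eRk (M : Matroid α) (X : Set α) : erk M X = M.eRk X := by
  obtain ⟨I, hI⟩ := M.exists_isBasis' X
  refine le_antisymm (iSup₂_le fun J hJ => hJ.1.encard_le_eRk_of_subset hJ.2) ?_
  rw [← hI.encard_eq_eRk]
  exact le_iSup₂ (f := fun (J : Set α) (_ : J ∈ {J | M.Indep J ∧ J ⊆ X}) => J.encard)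
    I ⟨hI.indep, hI.subset⟩

lemma isCircuit_iff {C : Set α} : IsCircuit M C ↔ M.IsCircuit C := by
  rw [Matroid.isCircuit_iff_forall_ssubset]
  rfl

lemma dep_insert_of_mem_closure {X : Set α} {e : α} (he : e ∈ M.closure X) (heX : e ∉ X)
    (hX : X ⊆ M.E) : M.Dep (insert e X) := by
  refine ⟨fun hI => hI.notMem_closure_sdiff_of_mem (mem_insert e X) ?_,
    insert_subset (M.closure_subset_ground X he) hX⟩
  rwa [insert_sdiff_self_of_notMem heX]

lemma eRk_insert_of_mem_closure {X : Set α} {e : α} (he : e ∈ M.closure X) :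
    M.eRk (insert e X) = M.eRk X := by
  rw [← M.eRk_closure_eq, closure_insert_eq_of_mem_closure he, M.eRk_closure_eq]

lemma eRank_le_eRk_of_coindep {S T : Set α} (hT : M.Coindep T) (hE : M.E ⊆ S ∪ T) :
    M.eRank ≤ M.eRk S := by
  rw [← hT.compl_spanning.eRk_eq]
  exact M.eRk_mono (sdiff_subset_iff.2 (union_comm S T ▸ hE))

lemma dep_of_eRk_dual_lt {S T : Set α} (hTE : T ⊆ M.E) (hE : M.E ⊆ S ∪ T)
    (hS : M✶.eRk S < M✶.eRank) : M.Dep T :=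
  ⟨fun hT => hS.not_ge (eRank_le_eRk_of_coindep (dual_coindep_iff.2 hT) hE), hTE⟩

/-! ### Three-connectivity -/

/-- `M` has at least four elements and no 2-separation with a finite side. The separation is
measured on the side `X` alone by `r(X) + r✶(X) - |X|`, which equals `r(X) + r(E - X) - r(M)`; in
this form the condition is visibly self-dual. -/
structure NoTwoSep (M : Matroid α) : Prop where
  four_le_encard : 4 ≤ M.E.encard
  encard_compl_le_one : ∀ X ⊆ M.E, X.Finite → 2 ≤ X.encard →
    M.eRk X + M✶.eRk X ≤ X.encard + 1 → (M.E \ X).encard ≤ 1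

lemma ThreeConn.noTwoSep (h : ThreeConn M) (h4 : 4 ≤ M.E.encard) : NoTwoSep M where
  four_le_encard := h4
  encard_compl_le_one X hX hfin h2 hr := by
    by_contra! hlt
    refine h.2 X (M.E \ X) ⟨union_sdiff_cancel hX, disjoint_sdiff_right, h2,
      by simpa only [one_add_one_eq_two] using Order.add_one_le_of_lt hlt, ?_⟩
    rw [erk_eq_eRk, erk_eq_eRk, erk_eq_eRk, eRk_ground,
      ← ENat.add_le_add_iff_right (encard_ne_top_iff.2 hfin)]
    calc M.eRk X + M.eRk (M.E \ X) + X.encard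
        = M.eRk X + M✶.eRk X + M.eRank := by
          rw [add_assoc, ← M.eRk_dual_add_eRank X hX, ← add_assoc]
      _ ≤ X.encard + 1 + M.eRank := by gcongr
      _ = M.eRank + 1 + X.encard := by ring

namespace NoTwoSep

lemma dual (hM : NoTwoSep M) : NoTwoSep M✶ where
  four_le_encard := hM.four_le_encard
  encard_compl_le_one X hX hfin h2 hr :=
    hM.encard_compl_le_one X hX hfin h2 (by rwa [dual_dual, add_comm] at hr)

lemma not_dep_pair_of_ne (hM : NoTwoSep M) {a b : α} (hab : a ≠ b) : ¬ M.Dep {a, b} := by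
  intro hd
  have hr : M.eRk {a, b} + 1 ≤ 2 := by
    simpa only [encard_pair hab] using
      Order.add_one_le_of_lt (eRk_lt_encard_of_dep_of_finite (toFinite {a, b}) hd)
  have hcompl := hM.encard_compl_le_one {a, b} hd.subset_ground (toFinite _) (encard_pair hab).ge
    (by
      calc M.eRk {a, b} + M✶.eRk {a, b} ≤ 1 + ({a, b} : Set α).encard := by
            gcongr
            · exact (ENat.add_le_add_iff_right ENat.one_ne_top).1 (hr.trans_eq (by norm_num))
            · exact M✶.eRk_le_encard _
        _ = ({a, b} : Set α).encard + 1 := add_comm _ _)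
  have hfour : (4 : ℕ∞) ≤ 1 + 2 := calc
    4 ≤ M.E.encard := hM.four_le_encard
    _ = (M.E \ {a, b}).encard + ({a, b} : Set α).encard :=
      (encard_sdiff_add_encard_of_subset hd.subset_ground).symm
    _ ≤ 1 + 2 := by rw [encard_pair hab]; gcongr
  norm_num at hfour

lemma pair_indep (hM : NoTwoSep M) {a b : α} (ha : a ∈ M.E) (hb : b ∈ M.E) :
    M.Indep {a, b} := by
  have indep_of_ne {c d : α} (hc : c ∈ M.E) (hd : d ∈ M.E) (hcd : c ≠ d) : M.Indep {c, d} :=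
    not_dep_iff (insert_subset hc (singleton_subset_iff.2 hd)) |>.1 (hM.not_dep_pair_of_ne hcd)
  obtain rfl | hab := eq_or_ne a b
  · obtain ⟨c, hc, hca⟩ := exists_ne_of_one_lt_encard
      (lt_of_lt_of_le (by norm_num : (1 : ℕ∞) < 4) hM.four_le_encard) a
    exact (indep_of_ne hc ha hca).subset (by simp)
  · exact indep_of_ne ha hb hab

variable {a b c d p q r : α}

lemma pairwise_ne_of_dep (hM : NoTwoSep M) (hd : M.Dep {a, b, c}) : a ≠ b ∧ a ≠ c ∧ b ≠ c := by
  have hE := hd.subset_ground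
  simp only [insert_subset_iff, singleton_subset_iff] at hE
  refine ⟨?_, ?_, ?_⟩ <;> rintro rfl
  · exact hd.not_indep (by simpa using hM.pair_indep hE.1 hE.2.2)
  · exact hd.not_indep ((hM.pair_indep hE.1 hE.2.1).subset (by grind))
  · exact hd.not_indep (by simpa using hM.pair_indep hE.1 hE.2.1)

lemma isCircuit_of_dep (hM : NoTwoSep M) (hd : M.Dep {a, b, c}) : M.IsCircuit {a, b, c} := by
  have hE := hd.subset_ground
  simp only [insert_subset_iff, singleton_subset_iff] at hE
  obtain ⟨ha, hb, hc⟩ := hE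
  refine isCircuit_iff_dep_forall_sdiff_singleton_indep.2 ⟨hd, ?_⟩
  rintro x (rfl | rfl | rfl)
  · exact (hM.pair_indep hb hc).subset (by grind)
  · exact (hM.pair_indep ha hc).subset (by grind)
  · exact (hM.pair_indep ha hb).subset (by grind)

lemma mem_closure_of_dep (hM : NoTwoSep M) (hd : M.Dep {a, b, c}) : a ∈ M.closure {b, c} :=
  (hM.pair_indep (hd.subset_ground (by simp)) (hd.subset_ground (by simp))).mem_closure_iff.2
    (.inl hd)

lemma dep_of_shared_pair (hM : NoTwoSep M) (hc : M.Dep {c, a, b}) (hd : M.Dep {d, a, b})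
    (hcd : c ≠ d) : M.Dep {c, d, b} := by
  have hE := hd.subset_ground
  simp only [insert_subset_iff, singleton_subset_iff] at hE
  refine dep_insert_of_mem_closure
    (M.closure_subset_closure_of_subset_closure ?_ (hM.mem_closure_of_dep hc))
    (by simp [hcd, (hM.pairwise_ne_of_dep hc).2.1]) (by grind)
  exact insert_subset (hM.mem_closure_of_dep (insert_comm d a {b} ▸ hd))
    (singleton_subset_iff.2 (M.mem_closure_of_mem' (by simp) hE.2.2))

lemma mem_or_mem_of_dep (hM : NoTwoSep M) (hd : M.Dep {a, b, c}) (hd' : M✶.Dep {p, q, r})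
    (ha : a ∈ ({p, q, r} : Set α)) : b ∈ ({p, q, r} : Set α) ∨ c ∈ ({p, q, r} : Set α) := by
  obtain ⟨x, hx, hxa⟩ := ((hM.isCircuit_of_dep hd).isCocircuit_inter_nontrivial
    (hM.dual.isCircuit_of_dep hd') ⟨a, by simp, ha⟩).exists_ne a
  grind

end NoTwoSep

/-! ### Cyclic fans -/

/-- A fan of `M` using all elements and closed up to a cycle `s 0, w 0, s 1, w 1, ...` of length
`2 * r`, with spokes `s i` and rim elements `w i`. The triangles and triads are only required to be
dependent and codependent, which suffices under `NoTwoSep`. -/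
structure IsCyclicFan (M : Matroid α) (r : ℕ) (s w : ZMod r → α) : Prop where
  two_le : 2 ≤ r
  spoke_injective : Function.Injective s
  rim_injective : Function.Injective w
  spoke_ne_rim : ∀ i j, s i ≠ w j
  ground_eq : M.E = range s ∪ range w
  triangle : ∀ i, M.Dep {s i, w i, s (i + 1)}
  triad : ∀ i, M✶.Dep {w i, s (i + 1), w (i + 1)}

/-- The elements of `M` can be labelled as a cyclic fan. -/
def HasCyclicFan (M : Matroid α) : Prop :=
  ∃ (r : ℕ) (s w : ZMod r → α), IsCyclicFan M r s w

lemma left_mem_cycArc {r : ℕ} {i j : ZMod r} (hij : i ≠ j) : i ∈ cycArc r i j := by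
  refine ⟨0, Nat.pos_of_ne_zero ?_, by simp⟩
  simpa [sub_eq_zero] using hij.symm

lemma right_notMem_cycArc {r : ℕ} (i j : ZMod r) : j ∉ cycArc r i j := by
  rintro ⟨m, hm, hj⟩
  rw [hj, add_sub_cancel_left, ZMod.val_natCast] at hm
  exact hm.not_ge (Nat.mod_le _ _)

lemma exists_first_mem {r : ℕ} [NeZero r] {A : Set (ZMod r)} {a : ZMod r} (ha : a ∉ A)
    (hA : A.Nonempty) :
    ∃ m : ℕ, a + m + 1 ∈ A ∧ ∀ l ≤ m, a + (l : ZMod r) ∉ A := by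
  classical
  obtain ⟨b, hb⟩ := hA
  have hex : ∃ m : ℕ, a + m ∈ A := ⟨(b - a).val, by simpa using hb⟩
  obtain ⟨m, hm⟩ := Nat.exists_eq_succ_of_ne_zero (n := Nat.find hex) fun h0 => by
    have := Nat.find_spec hex
    simp [h0, ha] at this
  refine ⟨m, ?_, fun l hl => Nat.find_min hex (by omega)⟩
  simpa [hm, add_assoc] using Nat.find_spec hex

lemma exists_maximal_cycArc_subset {r : ℕ} [NeZero r] {A : Set (ZMod r)} (hA : A.Nonempty)
    (hA' : A ≠ univ) :
    ∃ i j, i ∉ A ∧ i + 1 ∈ A ∧ j ∈ A ∧ j + 1 ∉ A ∧ cycArc r (i + 1) (j + 1) ⊆ A := by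
  obtain ⟨a, ha⟩ := (ne_univ_iff_exists_notMem A).1 hA'
  obtain ⟨m, hm, hlt⟩ := exists_first_mem ha hA
  obtain ⟨m', hm', hlt'⟩ := exists_first_mem (A := Aᶜ) (not_not.2 hm) ⟨a, ha⟩
  simp only [mem_compl_iff, not_not] at hm' hlt'
  refine ⟨a + m, a + m + 1 + m', hlt m le_rfl, hm, hlt' m' le_rfl, hm', ?_⟩
  rintro _ ⟨l, hl, rfl⟩
  refine hlt' l (Nat.le_of_lt_succ (hl.trans_le ?_))
  rw [show a + m + 1 + m' + 1 - (a + m + 1) = ((m' + 1 : ℕ) : ZMod r) by push_cast; ring,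
    ZMod.val_natCast]
  exact Nat.mod_le _ _

namespace IsCyclicFan

variable {r : ℕ} {s w : ZMod r → α} {C : Set α}

lemma neZero (h : IsCyclicFan M r s w) : NeZero r := ⟨by have := h.two_le; omega⟩

lemma sumElim_injective (h : IsCyclicFan M r s w) : Function.Injective (Sum.elim s w) :=
  h.spoke_injective.sumElim h.rim_injective h.spoke_ne_rim

lemma range_spoke_subset_ground (h : IsCyclicFan M r s w) : range s ⊆ M.E :=
  h.ground_eq ▸ subset_union_left

lemma range_rim_subset_ground (h : IsCyclicFan M r s w) : range w ⊆ M.E :=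
  h.ground_eq ▸ subset_union_right

lemma spoke_notMem_range_rim (h : IsCyclicFan M r s w) (i : ZMod r) : s i ∉ range w := by
  rintro ⟨j, hj⟩
  exact h.spoke_ne_rim i j hj.symm

lemma dual (h : IsCyclicFan M r s w) : IsCyclicFan M✶ r w (fun i => s (i + 1)) where
  two_le := h.two_le
  spoke_injective := h.rim_injective
  rim_injective := h.spoke_injective.comp (add_left_injective 1)
  spoke_ne_rim i j := (h.spoke_ne_rim _ i).symm
  ground_eq := by
    rw [dual_ground, h.ground_eq, union_comm,
      ← (add_right_surjective (1 : ZMod r)).range_comp s]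
    rfl
  triangle := h.triad
  triad i := by simpa only [dual_dual] using h.triangle (i + 1)

/-! #### Circuits of a cyclic fan -/

lemma spoke_mem_closure (h : IsCyclicFan M r s w) (hM : NoTwoSep M) (i : ZMod r) (m : ℕ) :
    s (i + m) ∈ M.closure (insert (s i) (w '' {k | ∃ l < m, k = i + (l : ℕ)})) := by
  induction m with
  | zero =>
    exact M.mem_closure_of_mem' (by simp) (h.range_spoke_subset_ground (mem_range_self _))
  | succ m ih =>
    have hnext : s (i + m + 1) ∈ M.closure {s (i + m), w (i + m)} := by
      refine hM.mem_closure_of_dep ?_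
      convert h.triangle (i + m) using 1
      grind
    rw [Nat.cast_succ, ← add_assoc]
    refine M.closure_subset_closure_of_subset_closure (insert_subset ?_
      (singleton_subset_iff.2 ?_)) hnext
    · refine M.closure_subset_closure (insert_subset_insert (image_mono ?_)) ih
      rintro k ⟨l, hl, rfl⟩
      exact ⟨l, by omega, rfl⟩
    · exact M.mem_closure_of_mem' (.inr ⟨_, ⟨m, by omega, rfl⟩, rfl⟩)
        (h.range_rim_subset_ground (mem_range_self _))

lemma dep_arc (h : IsCyclicFan M r s w) (hM : NoTwoSep M) {i j : ZMod r} (hij : i ≠ j) :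
    M.Dep ({s i, s j} ∪ w '' cycArc r i j) := by
  have := h.neZero
  have hj : s j ∈ M.closure (insert (s i) (w '' cycArc r i j)) := by
    have := h.spoke_mem_closure hM i (j - i).val
    rwa [ZMod.natCast_zmod_val, add_sub_cancel] at this
  rw [pair_comm, insert_union, singleton_union]
  refine dep_insert_of_mem_closure hj ?_ ?_
  · rintro (hs | ⟨k, -, hk⟩)
    · exact hij (h.spoke_injective hs).symm
    · exact h.spoke_ne_rim _ _ hk.symm
  · exact insert_subset (h.range_spoke_subset_ground (mem_range_self _))
      ((image_subset_range _ _).trans h.range_rim_subset_ground)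

lemma isCocircuit_triad (h : IsCyclicFan M r s w) (hM : NoTwoSep M) (i : ZMod r) :
    M.IsCocircuit {w i, s (i + 1), w (i + 1)} :=
  hM.dual.isCircuit_of_dep (h.triad i)

lemma exists_rim_mem (h : IsCyclicFan M r s w) (hM : NoTwoSep M) (hC : M.IsCircuit C) :
    ∃ i, w i ∈ C := by
  obtain ⟨x, hx⟩ := hC.nonempty
  obtain ⟨i, rfl⟩ | ⟨i, rfl⟩ := h.ground_eq ▸ hC.subset_ground hx
  · obtain ⟨y, ⟨hyC, hy⟩, hne⟩ := (hC.isCocircuit_inter_nontrivial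
      (h.isCocircuit_triad hM (i - 1)) ⟨s i, hx, by simp⟩).exists_ne (s i)
    obtain rfl | rfl | rfl := hy
    · exact ⟨_, hyC⟩
    · simp at hne
    · exact ⟨_, hyC⟩
  · exact ⟨i, hx⟩

lemma spoke_mem_of_rim_mem_iff (h : IsCyclicFan M r s w) (hM : NoTwoSep M) (hC : M.IsCircuit C)
    {i : ZMod r} (hw : w i ∈ C ↔ w (i + 1) ∉ C) : s (i + 1) ∈ C := by
  have hne : (C ∩ {w i, s (i + 1), w (i + 1)}).Nonempty := by
    by_cases hi : w i ∈ C
    · exact ⟨w i, hi, by simp⟩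
    · exact ⟨w (i + 1), by tauto, by simp⟩
  by_contra hs
  exact (hC.isCocircuit_inter_nontrivial (h.isCocircuit_triad hM i) hne).not_subsingleton
    (by grind [Set.Subsingleton])

/-- A circuit not containing the whole rim contains a maximal rim arc. By orthogonality with the
triads at its two ends it contains the two bounding spokes as well, and by `dep_arc` nothing
else. -/
lemma range_rim_subset_or_eq_arc (h : IsCyclicFan M r s w) (hM : NoTwoSep M)
    (hC : M.IsCircuit C) :
    range w ⊆ C ∨ ∃ i j : ZMod r, i ≠ j ∧ C = {s i, s j} ∪ w '' cycArc r i j := by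
  have := h.neZero
  by_cases hrim : w ⁻¹' C = univ
  · exact .inl (range_subset_iff.2 (eq_univ_iff_forall.1 hrim))
  obtain ⟨i, j, hi, hi', hj, hj', harc⟩ :=
    exists_maximal_cycArc_subset (h.exists_rim_mem hM hC) hrim
  have hij : i + 1 ≠ j + 1 := fun heq => hj' (heq ▸ hi')
  refine .inr ⟨i + 1, j + 1, hij, (hC.eq_of_dep_subset (h.dep_arc hM hij) ?_).symm⟩
  refine union_subset (insert_subset ?_ (singleton_subset_iff.2 ?_)) (image_subset_iff.2 harc)
  · exact h.spoke_mem_of_rim_mem_iff hM hC (iff_of_false hi (not_not.2 hi'))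
  · exact h.spoke_mem_of_rim_mem_iff hM hC (iff_of_true hj hj')

lemma isCircuit_arc (h : IsCyclicFan M r s w) (hM : NoTwoSep M) {i j : ZMod r} (hij : i ≠ j) :
    M.IsCircuit ({s i, s j} ∪ w '' cycArc r i j) := by
  have := h.neZero
  have spoke_mem {k} (hk : s k ∈ {s i, s j} ∪ w '' cycArc r i j) : k = i ∨ k = j := by
    simpa [h.spoke_injective.eq_iff, (h.spoke_ne_rim _ _).symm] using hk
  have rim_mem {k} (hk : w k ∈ {s i, s j} ∪ w '' cycArc r i j) : k ∈ cycArc r i j := by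
    simpa [h.rim_injective.eq_iff, (h.spoke_ne_rim _ _).symm] using hk
  obtain ⟨C, hCD, hC⟩ := (h.dep_arc hM hij).exists_isCircuit_subset
  obtain hw | ⟨k, l, hkl, rfl⟩ := h.range_rim_subset_or_eq_arc hM hC
  · exact (right_notMem_cycArc i j (rim_mem (hCD (hw (mem_range_self j))))).elim
  have hk := left_mem_cycArc hkl
  have hkC := rim_mem (hCD (.inr (mem_image_of_mem w hk)))
  obtain rfl | rfl := spoke_mem (hCD (by simp : s k ∈ _))
  · obtain rfl | rfl := spoke_mem (hCD (by simp : s l ∈ _))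
    · exact (hkl rfl).elim
    · exact hC
  · exact (right_notMem_cycArc i _ hkC).elim

/-! #### Wheels and whirls -/

lemma encard_range_rim (h : IsCyclicFan M r s w) : (range w).encard = (range s).encard := by
  rw [← image_univ, ← image_univ, h.rim_injective.encard_image, h.spoke_injective.encard_image]

lemma spanning_range_spoke (h : IsCyclicFan M r s w) (hM : NoTwoSep M) :
    M.Spanning (range s) := by
  rw [spanning_iff_ground_subset_closure h.range_spoke_subset_ground, h.ground_eq]
  refine union_subset (M.subset_closure _ h.range_spoke_subset_ground) (range_subset_iff.2 ?_)
  intro i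
  refine M.closure_subset_closure (X := {s i, s (i + 1)}) (by grind) (hM.mem_closure_of_dep ?_)
  rw [insert_comm]
  exact h.triangle i

lemma dep_insert_rim (h : IsCyclicFan M r s w) (hM : NoTwoSep M) (i : ZMod r) :
    M.Dep (insert (s i) (range w)) := by
  have := h.neZero
  refine ⟨fun hI => ?_, insert_subset (h.range_spoke_subset_ground (mem_range_self i))
    h.range_rim_subset_ground⟩
  have hle : (range s).encard + 1 ≤ (range s).encard := calc
    (range s).encard + 1 = (insert (s i) (range w)).encard := by
      rw [encard_insert_of_notMem (h.spoke_notMem_range_rim i), h.encard_range_rim]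
    _ ≤ M.eRank := hI.encard_le_eRank
    _ = M.eRk (range s) := (h.spanning_range_spoke hM).eRk_eq.symm
    _ ≤ (range s).encard := M.eRk_le_encard _
  exact (ENat.lt_add_one_iff (encard_ne_top_iff.2 (finite_range s))).2 le_rfl |>.not_ge hle

lemma isWheel_of_dep_rim (h : IsCyclicFan M r s w) (hM : NoTwoSep M) (hw : M.Dep (range w)) :
    IsWheel M := by
  have hrim : M.IsCircuit (range w) := by
    obtain ⟨C, hCw, hC⟩ := hw.exists_isCircuit_subset
    obtain hwC | ⟨i, j, -, rfl⟩ := h.range_rim_subset_or_eq_arc hM hC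
    · rwa [hwC.antisymm hCw]
    · exact (h.spoke_notMem_range_rim i (hCw (by simp))).elim
  refine ⟨r, h.two_le, s, w, h.sumElim_injective, h.ground_eq, fun C => isCircuit_iff.trans ?_⟩
  constructor
  · intro hC
    exact (h.range_rim_subset_or_eq_arc hM hC).imp_left
      fun hwC => (hC.eq_of_dep_subset hw hwC).symm
  · rintro (rfl | ⟨i, j, hij, rfl⟩)
    · exact hrim
    · exact h.isCircuit_arc hM hij

lemma eq_insert_rim_of_isCircuit (h : IsCyclicFan M r s w) (hM : NoTwoSep M)
    (hw : M.Indep (range w)) (hC : M.IsCircuit C) (hwC : range w ⊆ C) :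
    ∃ i, C = insert (s i) (range w) := by
  obtain ⟨x, hx, hxw⟩ := not_subset.1 fun hCw => hC.not_indep (hw.subset hCw)
  obtain ⟨i, rfl⟩ := (h.ground_eq ▸ hC.subset_ground hx).resolve_right hxw
  exact ⟨i, (hC.eq_of_dep_subset (h.dep_insert_rim hM i) (insert_subset hx hwC)).symm⟩

lemma isCircuit_insert_rim (h : IsCyclicFan M r s w) (hM : NoTwoSep M)
    (hw : M.Indep (range w)) (i : ZMod r) : M.IsCircuit (insert (s i) (range w)) := by
  obtain ⟨C, hCi, hC⟩ := (h.dep_insert_rim hM i).exists_isCircuit_subset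
  have eq_of_spoke_mem {k} (hk : s k ∈ C) : k = i :=
    h.spoke_injective ((hCi hk).resolve_right (h.spoke_notMem_range_rim k))
  obtain hwC | ⟨k, l, hkl, rfl⟩ := h.range_rim_subset_or_eq_arc hM hC
  · obtain ⟨k, rfl⟩ := h.eq_insert_rim_of_isCircuit hM hw hC hwC
    obtain rfl := eq_of_spoke_mem (mem_insert _ _)
    exact hC
  · exact (hkl ((eq_of_spoke_mem (by simp)).trans (eq_of_spoke_mem (by simp)).symm)).elim

lemma isWhirl_of_indep_rim (h : IsCyclicFan M r s w) (hM : NoTwoSep M)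
    (hw : M.Indep (range w)) : IsWhirl M := by
  refine ⟨r, h.two_le, s, w, h.sumElim_injective, h.ground_eq, fun C => isCircuit_iff.trans ?_⟩
  constructor
  · intro hC
    exact (h.range_rim_subset_or_eq_arc hM hC).imp_left (h.eq_insert_rim_of_isCircuit hM hw hC)
  · rintro (⟨i, rfl⟩ | ⟨i, j, hij, rfl⟩)
    · exact h.isCircuit_insert_rim hM hw i
    · exact h.isCircuit_arc hM hij

end IsCyclicFan

lemma natCast_two_mul_val_add_one {r : ℕ} [NeZero r] (i : ZMod r) :
    ((2 * (i + 1).val : ℕ) : ZMod (2 * r)) = (2 * i.val + 2 : ℕ) := by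
  rw [ZMod.natCast_eq_natCast_iff, ← mul_add_one]
  refine Nat.ModEq.mul_left' 2 ((ZMod.natCast_eq_natCast_iff _ _ _).1 ?_)
  simp

lemma HasCyclicFan.of_forall_dep {r : ℕ} {G : ZMod (2 * r) → α} (hr : 2 ≤ r)
    (hG : Function.Injective G) (hE : M.E = range G)
    (htriangle : ∀ k : ℕ, M.Dep {G (2 * k : ℕ), G (2 * k + 1 : ℕ), G (2 * k + 2 : ℕ)})
    (htriad : ∀ k : ℕ, M✶.Dep {G (2 * k + 1 : ℕ), G (2 * k + 2 : ℕ), G (2 * k + 3 : ℕ)}) :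
    HasCyclicFan M := by
  have : NeZero r := ⟨by omega⟩
  have : NeZero (2 * r) := ⟨by omega⟩
  have natCast_inj {k l : ℕ} (hk : k < 2 * r) (hl : l < 2 * r) (hkl : G k = G l) : k = l :=
    ((ZMod.natCast_eq_natCast_iff _ _ _).1 (hG hkl)).eq_of_lt_of_lt hk hl
  refine ⟨r, fun i => G (2 * i.val : ℕ), fun i => G (2 * i.val + 1 : ℕ), hr, ?_, ?_, ?_, ?_, ?_, ?_⟩
  · intro i j hij
    have := natCast_inj (by grind [i.val_lt]) (by grind [j.val_lt]) hij
    exact ZMod.val_injective r (by omega)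
  · intro i j hij
    have := natCast_inj (by grind [i.val_lt]) (by grind [j.val_lt]) hij
    exact ZMod.val_injective r (by omega)
  · intro i j hij
    have := natCast_inj (by grind [i.val_lt]) (by grind [j.val_lt]) hij
    omega
  · rw [hE]
    refine Subset.antisymm (range_subset_iff.2 fun a => ?_) (by grind)
    have hval : ((a.val / 2 : ℕ) : ZMod r).val = a.val / 2 :=
      ZMod.val_natCast_of_lt (by have := a.val_lt; omega)
    obtain ha | ha : 2 * (a.val / 2) = a.val ∨ 2 * (a.val / 2) + 1 = a.val := by omega
    · exact .inl ⟨(a.val / 2 : ℕ), by simp only [hval, ha, ZMod.natCast_zmod_val]⟩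
    · exact .inr ⟨(a.val / 2 : ℕ), by simp only [hval, ha, ZMod.natCast_zmod_val]⟩
  · intro i
    rw [natCast_two_mul_val_add_one]
    exact htriangle i.val
  · intro i
    rw [Nat.cast_succ (2 * (i + 1).val), natCast_two_mul_val_add_one, ← Nat.cast_succ]
    exact htriad i.val

lemma HasCyclicFan.of_dual (h : HasCyclicFan M✶) : HasCyclicFan M := by
  obtain ⟨r, s, w, hfan⟩ := h
  exact ⟨r, w, fun i => s (i + 1), M.dual_dual ▸ hfan.dual⟩

lemma HasCyclicFan.isWheel_or_isWhirl (h : HasCyclicFan M) (hM : NoTwoSep M) :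
    IsWheel M ∨ IsWhirl M := by
  obtain ⟨r, s, w, hfan⟩ := h
  by_cases hw : M.Indep (range w)
  · exact .inr (hfan.isWhirl_of_indep_rim hM hw)
  · exact .inl (hfan.isWheel_of_dep_rim hM ⟨hw, hfan.range_rim_subset_ground⟩)

/-! ### Fans starting with a triad -/

/-- `g 0, ..., g (n - 1)` are distinct elements of `M` whose consecutive triples are alternately
codependent and dependent. Under `NoTwoSep` and for `3 ≤ n` this is a fan whose first triple is a
triad; a fan whose first triple is a triangle is an `IsTriadFan` of the dual. -/
structure IsTriadFan (M : Matroid α) (n : ℕ) (g : ℕ → α) : Prop where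
  injOn : InjOn g (Iio n)
  mem_ground : ∀ i < n, g i ∈ M.E
  triad : ∀ i, i + 2 < n → Even i → M✶.Dep {g i, g (i + 1), g (i + 2)}
  triangle : ∀ i, i + 2 < n → Odd i → M.Dep {g i, g (i + 1), g (i + 2)}

lemma image_Iio_succ (g : ℕ → α) (n : ℕ) : g '' Iio (n + 1) = insert (g n) (g '' Iio n) := by
  rw [← Order.succ_eq_add_one, Order.Iio_succ_eq_insert, image_insert_eq]

lemma injOn_Iio_succ {g : ℕ → α} {n : ℕ} :
    InjOn g (Iio (n + 1)) ↔ InjOn g (Iio n) ∧ g n ∉ g '' Iio n := by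
  rw [← Order.succ_eq_add_one, Order.Iio_succ_eq_insert, injOn_insert self_notMem_Iio]

lemma image_Iio_succ_eq_insert_zero (g : ℕ → α) (n : ℕ) :
    g '' Iio (n + 1) = insert (g 0) ((fun i => g (i + 1)) '' Iio n) := by
  ext x
  constructor
  · rintro ⟨_ | i, hi, rfl⟩
    · exact .inl rfl
    · exact .inr ⟨i, Nat.lt_of_succ_lt_succ hi, rfl⟩
  · rintro (rfl | ⟨i, hi, rfl⟩)
    · exact ⟨0, n.succ_pos, rfl⟩
    · exact ⟨i + 1, Nat.succ_lt_succ hi, rfl⟩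

lemma injOn_add_natCast {N : ℕ} {G : ZMod N → α} (hG : Function.Injective G) (a : ZMod N) :
    InjOn (fun i : ℕ => G (a + i)) (Iio N) := fun _ hi _ hj hij =>
  ((ZMod.natCast_eq_natCast_iff _ _ _).1 (add_right_injective a (hG hij))).eq_of_lt_of_lt hi hj

lemma image_add_natCast_Iio {N : ℕ} [NeZero N] (G : ZMod N → α) (a : ZMod N) :
    (fun i : ℕ => G (a + i)) '' Iio N = range G := by
  refine Subset.antisymm (by grind) (range_subset_iff.2 fun b => ?_)
  exact ⟨(b - a).val, ZMod.val_lt _, by simp⟩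

namespace IsTriadFan

variable {n : ℕ} {g : ℕ → α} {e f : α}

lemma take (h : IsTriadFan M n g) {m : ℕ} (hmn : m ≤ n) : IsTriadFan M m g where
  injOn := h.injOn.mono (Iio_subset_Iio hmn)
  mem_ground i hi := h.mem_ground i (hi.trans_le hmn)
  triad i hi := h.triad i (hi.trans_le hmn)
  triangle i hi := h.triangle i (hi.trans_le hmn)

lemma tail (h : IsTriadFan M (n + 1) g) : IsTriadFan M✶ n (fun i => g (i + 1)) where
  injOn := h.injOn.comp (add_left_injective 1).injOn fun _ hi => Nat.succ_lt_succ hi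
  mem_ground i hi := h.mem_ground (i + 1) (by omega)
  triad i hi he := by simpa only [dual_dual] using h.triangle (i + 1) (by omega) he.add_one
  triangle i hi ho := h.triad (i + 1) (by omega) ho.add_one

lemma image_subset_ground (h : IsTriadFan M n g) : g '' Iio n ⊆ M.E :=
  image_subset_iff.2 h.mem_ground

lemma encard_image (h : IsTriadFan M n g) : (g '' Iio n).encard = n := by
  rw [h.injOn.encard_image, ← Finset.coe_Iio, encard_coe_eq_coe_finsetCard, Nat.card_Iio]

/-! #### Rank and corank of fans -/

lemma eRk_dual_image_le (h : IsTriadFan M n g) (hM : NoTwoSep M) :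
    M✶.eRk (g '' Iio n) ≤ (n / 2 + 1 : ℕ) := by
  induction n with
  | zero => simp
  | succ n ih =>
    have ih := ih (h.take n.le_succ)
    rw [image_Iio_succ]
    obtain rfl | ⟨k, rfl | rfl⟩ : n = 0 ∨ ∃ k, n = 2 * k + 1 ∨ n = 2 * k + 2 :=
      n.eq_zero_or_pos.imp_right fun _ => ⟨(n - 1) / 2, by omega⟩
    · simp
    · refine (M✶.eRk_insert_le_add_one _ _).trans ((add_le_add_left ih 1).trans ?_)
      norm_cast
      omega
    · have hcl : g (2 * k + 2) ∈ M✶.closure (g '' Iio (2 * k + 2)) := by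
        refine M✶.closure_subset_closure ?_ (hM.dual.mem_closure_of_dep (b := g (2 * k))
          (c := g (2 * k + 1)) ?_)
        · rw [image_Iio_succ, image_Iio_succ]
          grind
        · convert h.triad (2 * k) (by omega) (even_two_mul k) using 1
          grind
      rw [eRk_insert_of_mem_closure hcl]
      refine ih.trans ?_
      norm_cast
      omega

lemma eRk_image_le (h : IsTriadFan M (n + 1) g) (hM : NoTwoSep M) :
    M.eRk (g '' Iio (n + 1)) ≤ (n / 2 + 2 : ℕ) := by
  rw [image_Iio_succ_eq_insert_zero]
  refine (M.eRk_insert_le_add_one _ _).trans ?_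
  have := h.tail.eRk_dual_image_le hM.dual
  rw [dual_dual] at this
  exact_mod_cast add_le_add_left this 1

lemma eRk_add_eRk_dual_image_le (h : IsTriadFan M (n + 1) g) (hM : NoTwoSep M) :
    M.eRk (g '' Iio (n + 1)) + M✶.eRk (g '' Iio (n + 1)) ≤ (n + 3 : ℕ) := by
  calc _ ≤ ((n / 2 + 2 : ℕ) : ℕ∞) + ((n + 1) / 2 + 1 : ℕ) :=
        add_le_add (h.eRk_image_le hM) (h.eRk_dual_image_le hM)
    _ = (n + 3 : ℕ) := by norm_cast; omega

lemma encard_compl_insert_le_one (h : IsTriadFan M (n + 1) g) (hM : NoTwoSep M) (hn : 1 ≤ n)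
    (he : e ∉ g '' Iio (n + 1)) (hcl : e ∈ M.closure (g '' Iio (n + 1)))
    (hcl' : e ∈ M✶.closure (g '' Iio (n + 1))) :
    (M.E \ insert e (g '' Iio (n + 1))).encard ≤ 1 := by
  have hcard : (insert e (g '' Iio (n + 1))).encard = (n + 2 : ℕ) := by
    rw [encard_insert_of_notMem he, h.encard_image]
    norm_cast
  refine hM.encard_compl_le_one _
    (insert_subset (M.closure_subset_ground _ hcl) h.image_subset_ground)
    (((finite_Iio _).image g).insert e) ?_ ?_
  · rw [hcard]
    exact_mod_cast (by omega : 2 ≤ n + 2)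
  · rw [eRk_insert_of_mem_closure hcl, eRk_insert_of_mem_closure hcl', hcard]
    exact (h.eRk_add_eRk_dual_image_le hM).trans_eq (by norm_cast)

/-! #### Fans missing one element -/

lemma eRank_le (h : IsTriadFan M (n + 1) g) (hM : NoTwoSep M)
    (hE : M.E = insert f (g '' Iio (n + 1))) : M.eRank ≤ (n / 2 + 1 : ℕ) := by
  have hpair : M.Coindep {f, g 0} :=
    hM.dual.pair_indep (hE ▸ mem_insert _ _) (h.mem_ground 0 n.succ_pos)
  refine (eRank_le_eRk_of_coindep hpair ?_).trans
    (M.dual_dual ▸ h.tail.eRk_dual_image_le hM.dual)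
  rw [hE, image_Iio_succ_eq_insert_zero]
  grind

lemma eRank_dual_le (h : IsTriadFan M (n + 1) g) (hM : NoTwoSep M)
    (hE : M.E = insert f (g '' Iio (n + 1))) : M✶.eRank ≤ (n / 2 + 1 : ℕ) := by
  have hpair : M✶.Coindep {f, g n} :=
    dual_coindep_iff.2 (hM.pair_indep (hE ▸ mem_insert _ _) (h.mem_ground n n.lt_succ_self))
  refine (eRank_le_eRk_of_coindep hpair ?_).trans ((h.take n.le_succ).eRk_dual_image_le hM)
  rw [dual_ground, hE, image_Iio_succ]
  grind

lemma even_and_lt_eRank_dual (h : IsTriadFan M (n + 1) g) (hM : NoTwoSep M)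
    (hf : f ∉ g '' Iio (n + 1)) (hE : M.E = insert f (g '' Iio (n + 1))) :
    Even n ∧ (n / 2 : ℕ) < M✶.eRank := by
  have hsum : M.eRank + M✶.eRank = (n + 2 : ℕ) := by
    rw [eRank_add_eRank_dual, hE, encard_insert_of_notMem hf, h.encard_image]
    norm_cast
  obtain ⟨k, hk, hkle⟩ := ENat.le_natCast_iff.1 (h.eRank_le hM hE)
  obtain ⟨l, hl, hlle⟩ := ENat.le_natCast_iff.1 (h.eRank_dual_le hM hE)
  rw [hk, hl] at hsum
  rw [hl]
  norm_cast at hsum ⊢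
  rw [Nat.even_iff]
  omega

lemma dep_last (h : IsTriadFan M (n + 3) g) (hM : NoTwoSep M)
    (hf : f ∉ g '' Iio (n + 3)) (hE : M.E = insert f (g '' Iio (n + 3))) :
    M.Dep {g (n + 1), g (n + 2), f} := by
  obtain ⟨heven, hrank⟩ := h.even_and_lt_eRank_dual hM hf hE
  refine dep_of_eRk_dual_lt (S := g '' Iio (n + 1)) ?_ ?_ (lt_of_le_of_lt ?_ hrank)
  · rw [hE, image_Iio_succ, image_Iio_succ]
    grind
  · rw [hE, image_Iio_succ, image_Iio_succ]
    grind
  · refine ((h.take (by omega)).eRk_dual_image_le hM).trans ?_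
    norm_cast
    grind

/-- The ranks of `M` and `M✶` force the missing element `g (n + 3)` to complete the last triple. -/
lemma rotate (h : IsTriadFan M (n + 3) g) (hM : NoTwoSep M) (hg : InjOn g (Iio (n + 4)))
    (hE : M.E = g '' Iio (n + 4)) : IsTriadFan M✶ (n + 3) (fun i => g (i + 1)) := by
  have hf : g (n + 3) ∉ g '' Iio (n + 3) := (injOn_Iio_succ.1 hg).2
  have hE' : M.E = insert (g (n + 3)) (g '' Iio (n + 3)) := by rw [hE, image_Iio_succ]
  obtain ⟨heven, -⟩ := h.even_and_lt_eRank_dual hM hf hE'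
  refine ⟨hg.comp (add_left_injective 1).injOn fun _ hi => Nat.succ_lt_succ hi,
    fun i hi => hE ▸ mem_image_of_mem g (Nat.succ_lt_succ hi), fun i hi he => ?_,
    fun i hi ho => h.triad (i + 1) (by grind) ho.add_one⟩
  rw [dual_dual]
  obtain hlt | rfl : i < n ∨ i = n := by omega
  · exact h.triangle (i + 1) (by omega) he.add_one
  · exact h.dep_last hM hf hE'

section Rotation

variable {N : ℕ} {G : ZMod N → α}

lemma rotate_zmod (hN : N = n + 4) {a : ZMod N} (h : IsTriadFan M (n + 3) (fun i => G (a + i)))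
    (hM : NoTwoSep M) (hG : Function.Injective G) (hE : M.E = range G) :
    IsTriadFan M✶ (n + 3) (fun i => G (a + 1 + i)) := by
  have : NeZero N := ⟨by omega⟩
  convert h.rotate hM (hN ▸ injOn_add_natCast hG a) (by rw [hE, ← hN, image_add_natCast_Iio])
    using 3 with i
  push_cast
  ring

lemma rotate_two_mul (hN : N = n + 4) (h : IsTriadFan M (n + 3) (fun i => G (0 + i)))
    (hM : NoTwoSep M) (hG : Function.Injective G) (hE : M.E = range G) (k : ℕ) :
    IsTriadFan M (n + 3) (fun i => G ((2 * k : ℕ) + i)) := by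
  induction k with
  | zero => simpa only [mul_zero, Nat.cast_zero] using h
  | succ k ih =>
    have hrot := (ih.rotate_zmod hN hM hG hE).rotate_zmod hN hM.dual hG hE
    rw [dual_dual] at hrot
    convert hrot using 3 with i
    push_cast
    ring

end Rotation

lemma hasCyclicFan_of_ground_eq_range {r : ℕ} {G : ZMod (2 * r) → α} (hr : 2 * r = n + 4)
    (h : IsTriadFan M (n + 3) (fun i => G (0 + i))) (hM : NoTwoSep M)
    (hG : Function.Injective G) (hE : M.E = range G) : HasCyclicFan M := by
  refine .of_dual (.of_forall_dep (by omega) hG hE (fun k => ?_) fun k => ?_)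
  · simpa using (h.rotate_two_mul hr hM hG hE k).triad 0 (by omega) (by simp)
  · have hrot := (h.rotate_two_mul hr hM hG hE k).rotate_zmod hr hM hG hE
    convert hrot.triad 0 (by omega) (by simp) using 4 <;> push_cast <;> ring_nf

lemma congr {g' : ℕ → α} (h : IsTriadFan M n g) (hg : EqOn g g' (Iio n)) :
    IsTriadFan M n g' where
  injOn := h.injOn.congr hg
  mem_ground i hi := hg hi ▸ h.mem_ground i hi
  triad i hi he := by
    rw [← hg (mem_Iio.2 hi), ← hg (mem_Iio.2 (by omega : i + 1 < n)),
      ← hg (mem_Iio.2 (by omega : i < n))]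
    exact h.triad i hi he
  triangle i hi ho := by
    rw [← hg (mem_Iio.2 hi), ← hg (mem_Iio.2 (by omega : i + 1 < n)),
      ← hg (mem_Iio.2 (by omega : i < n))]
    exact h.triangle i hi ho

lemma hasCyclicFan_of_ground_eq_image (h : IsTriadFan M (n + 3) g) (hM : NoTwoSep M)
    (hg : InjOn g (Iio (n + 4))) (hE : M.E = g '' Iio (n + 4)) : HasCyclicFan M := by
  have hf : g (n + 3) ∉ g '' Iio (n + 3) := (injOn_Iio_succ.1 hg).2
  obtain ⟨⟨m, hm⟩, -⟩ := h.even_and_lt_eRank_dual hM hf (by rw [hE, image_Iio_succ])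
  have hr : 2 * (m + 1) = n + 4 := by omega
  let G (a : ZMod (2 * (m + 1))) : α := g a.val
  have hG : Function.Injective G := fun a b hab =>
    ZMod.val_injective _ (hg (hr ▸ a.val_lt) (hr ▸ b.val_lt) hab)
  have hGg : EqOn g (fun i : ℕ => G (0 + i)) (Iio (n + 4)) := fun i hi => by
    simp only [G, zero_add, ZMod.val_natCast_of_lt (hr ▸ mem_Iio.1 hi)]
  refine hasCyclicFan_of_ground_eq_range (G := G) hr
    (h.congr (hGg.mono (Iio_subset_Iio (by omega)))) hM hG ?_
  rw [hE, ← image_add_natCast_Iio G 0, hGg.image_eq, ← hr]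

lemma hasCyclicFan_of_ground_eq_insert (h : IsTriadFan M (n + 3) g) (hM : NoTwoSep M)
    (hf : f ∉ g '' Iio (n + 3)) (hE : M.E = insert f (g '' Iio (n + 3))) : HasCyclicFan M := by
  have heq : EqOn g (Function.update g (n + 3) f) (Iio (n + 3)) := fun i hi =>
    (Function.update_of_ne hi.ne _ _).symm
  refine (h.congr heq).hasCyclicFan_of_ground_eq_image hM ?_ ?_
  · rw [injOn_Iio_succ, Function.update_self, ← heq.image_eq]
    exact ⟨h.injOn.congr heq, hf⟩
  · rw [image_Iio_succ, Function.update_self, ← heq.image_eq, hE]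

/-! #### Extending a fan by one element -/

lemma cons (h : IsTriadFan M n g) (he : e ∉ g '' Iio n) (hd : M.Dep {e, g 0, g 1}) :
    IsTriadFan M✶ (n + 1) (fun i => i.casesOn e g) where
  injOn := by
    rintro (_ | i) hi (_ | j) hj hij
    · rfl
    · exact (he ⟨j, Nat.lt_of_succ_lt_succ hj, hij.symm⟩).elim
    · exact (he ⟨i, Nat.lt_of_succ_lt_succ hi, hij⟩).elim
    · rw [h.injOn (Nat.lt_of_succ_lt_succ hi) (Nat.lt_of_succ_lt_succ hj) hij]
  mem_ground := by
    rintro (_ | i) hi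
    · exact hd.subset_ground (mem_insert _ _)
    · exact h.mem_ground i (Nat.lt_of_succ_lt_succ hi)
  triad := by
    rintro (_ | i) hi heven <;> rw [dual_dual]
    · exact hd
    · exact h.triangle i (Nat.lt_of_succ_lt_succ hi) (by grind)
  triangle := by
    rintro (_ | i) hi hodd
    · simp at hodd
    · exact h.triad i (Nat.lt_of_succ_lt_succ hi) (by grind)

lemma comp_of_bijOn (h : IsTriadFan M n g) {σ : ℕ → ℕ} (hσ : BijOn σ (Iio n) (Iio n))
    (hσ₃ : ∀ i, i + 2 < n → ∃ j, j + 2 < n ∧ (Even j ↔ Even i) ∧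
      ({σ i, σ (i + 1), σ (i + 2)} : Set ℕ) = {j, j + 1, j + 2}) :
    IsTriadFan M n (g ∘ σ) := by
  have exists_triple (i : ℕ) (hi : i + 2 < n) : ∃ j, j + 2 < n ∧ (Even j ↔ Even i) ∧
      ({g (σ i), g (σ (i + 1)), g (σ (i + 2))} : Set α) = {g j, g (j + 1), g (j + 2)} := by
    obtain ⟨j, hj, hji, heq⟩ := hσ₃ i hi
    exact ⟨j, hj, hji, by simpa only [image_insert_eq, image_singleton] using congrArg (g '' ·) heq⟩
  refine ⟨h.injOn.comp hσ.injOn hσ.mapsTo, fun i hi => h.mem_ground _ (hσ.mapsTo hi),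
    fun i hi he => ?_, fun i hi ho => ?_⟩ <;> obtain ⟨j, hj, hji, heq⟩ := exists_triple i hi
  · simpa only [Function.comp_apply, heq] using h.triad j hj (hji.2 he)
  · simpa only [Function.comp_apply, heq] using h.triangle j hj (by grind)

lemma exists_extension_of_bijOn (h : IsTriadFan M n g) (he : e ∉ g '' Iio n) {σ : ℕ → ℕ}
    (hσ : BijOn σ (Iio n) (Iio n)) (hσ₃ : ∀ i, i + 2 < n → ∃ j, j + 2 < n ∧ (Even j ↔ Even i) ∧
      ({σ i, σ (i + 1), σ (i + 2)} : Set ℕ) = {j, j + 1, j + 2})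
    (hd : M.Dep {e, g (σ 0), g (σ 1)}) :
    ∃ g', IsTriadFan M✶ (n + 1) g' ∧ g' '' Iio (n + 1) = insert e (g '' Iio n) := by
  have himage : (g ∘ σ) '' Iio n = g '' Iio n := by rw [image_comp, hσ.image_eq]
  refine ⟨_, (h.comp_of_bijOn hσ hσ₃).cons (himage ▸ he) hd, ?_⟩
  rw [image_Iio_succ_eq_insert_zero]
  exact congrArg (insert e) himage

lemma mem_triad_of_dep (h : IsTriadFan M n g) (hM : NoTwoSep M) (he : e ∉ g '' Iio n) {i j t : ℕ}
    (hd : M.Dep {e, g i, g j}) (hj : j < n) (ht : Even t) (htn : t + 2 < n)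
    (hi : t ≤ i ∧ i ≤ t + 2) : t ≤ j ∧ j ≤ t + 2 := by
  have hgi : g i ∈ ({g t, g (t + 1), g (t + 2)} : Set α) := by
    obtain rfl | rfl | rfl : i = t ∨ i = t + 1 ∨ i = t + 2 := by omega
    all_goals simp
  have heT : e ∉ ({g t, g (t + 1), g (t + 2)} : Set α) := by
    rintro (rfl | rfl | rfl) <;> exact he (mem_image_of_mem g (by grind))
  obtain hj' | hj' | hj' := (hM.mem_or_mem_of_dep (insert_comm e (g i) _ ▸ hd)
    (h.triad t htn ht) hgi).resolve_left heT
  all_goals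
    have := h.injOn hj (by grind) hj'
    omega

/-- Orthogonality with the triads of the fan excludes all other positions; the pair `g 0`, `g 2`
survives it only if no triad starts at `g 2`. -/
lemma index_cases_of_dep (h : IsTriadFan M n g) (hM : NoTwoSep M) (hn : 3 ≤ n)
    (he : e ∉ g '' Iio n) {i j : ℕ} (hij : i < j) (hj : j < n) (hd : M.Dep {e, g i, g j}) :
    (i = 0 ∧ j = 1) ∨ (i = 0 ∧ j = 2 ∧ n ≤ 4) ∨ (i + 2 = n ∧ j + 1 = n ∧ Odd n) := by
  have orth := fun t => h.mem_triad_of_dep (t := t) hM he hd hj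
  have orth' := fun t => h.mem_triad_of_dep (t := t) hM he (pair_comm (g i) (g j) ▸ hd)
    (hij.trans hj)
  obtain hi | hi := i.even_or_odd
  · have hi0 : i = 0 := by
      by_contra hi0
      have hi2 : 2 ≤ i := by grind
      have := orth (i - 2) (by grind) (by omega) (by omega)
      omega
    subst hi0
    have hj2 : j ≤ 2 := (orth 0 Even.zero (by omega) (by omega)).2
    have hn4 : j = 2 → n ≤ 4 := fun hj => by
      by_contra hn4
      have := orth' 2 even_two (by omega) (by omega)
      omega
    omega
  · have hji : j = i + 1 := by
      have hi1 := hi.pos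
      have := orth (i - 1) (by grind) (by omega) (by omega)
      omega
    subst hji
    have hn2 : n ≤ i + 3 := by
      by_contra hlt
      have := orth' (i + 1) (by grind) (by omega) (by omega)
      omega
    obtain rfl | rfl : n = i + 2 ∨ n = i + 3 := by omega
    · exact .inr (.inr ⟨rfl, rfl, by grind⟩)
    · have hlast : M.Dep {g (i + 2), g i, g (i + 1)} := by
        convert h.triangle i (by omega) hi using 1
        grind
      have hd' := hM.dep_of_shared_pair hd hlast fun heq => he ⟨i + 2, by grind, heq.symm⟩
      have := h.mem_triad_of_dep (t := i - 1) hM he (pair_comm (g (i + 2)) _ ▸ hd')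
        (by omega) (by grind) (by omega) (by omega)
      omega

lemma exists_extension_of_lt (h : IsTriadFan M n g) (hM : NoTwoSep M) (hn : 3 ≤ n)
    (he : e ∉ g '' Iio n) {i j : ℕ} (hij : i < j) (hj : j < n) (hd : M.Dep {e, g i, g j}) :
    ∃ g', IsTriadFan M✶ (n + 1) g' ∧ g' '' Iio (n + 1) = insert e (g '' Iio n) := by
  obtain ⟨rfl, rfl⟩ | ⟨rfl, rfl, hn4⟩ | ⟨hi, hj, hodd⟩ := h.index_cases_of_dep hM hn he hij hj hd
  · exact h.exists_extension_of_bijOn he (bijOn_id _) (fun i hi => ⟨i, hi, .rfl, rfl⟩) hd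
  · refine h.exists_extension_of_bijOn he (σ := Equiv.swap 1 2) ?_ (fun i hi => ?_) ?_
    · have hinv : LeftInvOn (Equiv.swap 1 2) (Equiv.swap 1 2) (Iio n) :=
        fun _ _ => Equiv.swap_apply_self ..
      have hmaps : MapsTo (Equiv.swap 1 2) (Iio n) (Iio n) := fun k hk => by
        grind
      exact InvOn.bijOn ⟨hinv, hinv⟩ hmaps hmaps
    · refine ⟨i, hi, .rfl, ?_⟩
      obtain rfl | rfl : i = 0 ∨ i = 1 := by omega
      all_goals grind
    · simpa [Equiv.swap_apply_of_ne_of_ne] using hd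
  · have hmaps : MapsTo (fun k => n - 1 - k) (Iio n) (Iio n) := fun k hk => by grind
    have hinv : LeftInvOn (fun k => n - 1 - k) (fun k => n - 1 - k) (Iio n) := fun k hk => by
      grind
    refine h.exists_extension_of_bijOn he (InvOn.bijOn ⟨hinv, hinv⟩ hmaps hmaps)
      (fun k hk => ⟨n - 3 - k, by omega, by grind, ?_⟩) ?_
    · grind
    · obtain ⟨rfl, rfl⟩ : i = n - 1 - 1 ∧ j = n - 1 - 0 := by omega
      exact pair_comm (g _) (g _) ▸ hd

lemma exists_extension (h : IsTriadFan M n g) (hM : NoTwoSep M) (hn : 3 ≤ n)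
    (he : e ∉ g '' Iio n) {x y : α} (hx : x ∈ g '' Iio n) (hy : y ∈ g '' Iio n)
    (hd : M.Dep {e, x, y}) :
    ∃ g', IsTriadFan M✶ (n + 1) g' ∧ g' '' Iio (n + 1) = insert e (g '' Iio n) := by
  obtain ⟨i, hi, rfl⟩ := hx
  obtain ⟨j, hj, rfl⟩ := hy
  have hij : i ≠ j := ne_of_apply_ne g (hM.pairwise_ne_of_dep hd).2.2
  obtain hij | hij := hij.lt_or_gt
  · exact h.exists_extension_of_lt hM hn he hij hj hd
  · exact h.exists_extension_of_lt hM hn he hij hi (pair_comm (g i) (g j) ▸ hd)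

lemma hasCyclicFan (h : IsTriadFan M n g) (hM : NoTwoSep M) (hn : 3 ≤ n)
    (he : e ∉ g '' Iio n) {x y z : α} (hx : x ∈ g '' Iio n) (hy : y ∈ g '' Iio n)
    (hz : z ∈ g '' Iio n) (hd : M.Dep {e, x, y}) (hd' : M✶.Dep {e, y, z}) : HasCyclicFan M := by
  obtain ⟨k, rfl⟩ := Nat.exists_eq_add_of_le' hn
  have hsub : insert e (g '' Iio (k + 3)) ⊆ M.E :=
    insert_subset (hd.subset_ground (mem_insert _ _)) h.image_subset_ground
  have hcl : e ∈ M.closure (g '' Iio (k + 3)) :=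
    M.closure_subset_closure (pair_subset hx hy) (hM.mem_closure_of_dep hd)
  have hcl' : e ∈ M✶.closure (g '' Iio (k + 3)) :=
    M✶.closure_subset_closure (pair_subset hy hz) (hM.dual.mem_closure_of_dep hd')
  have hcompl := h.encard_compl_insert_le_one hM (by omega) he hcl hcl'
  obtain hempty | ⟨f, hf⟩ := encard_le_one_iff_eq.1 hcompl
  · exact h.hasCyclicFan_of_ground_eq_insert hM he ((sdiff_eq_empty.1 hempty).antisymm hsub)
  · obtain ⟨g', h', himage⟩ := h.exists_extension hM hn he hx hy hd
    rw [← himage] at hsub hf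
    have hfE : f ∈ M.E \ g' '' Iio (k + 4) := hf ▸ mem_singleton f
    refine ((h'.take le_rfl).hasCyclicFan_of_ground_eq_insert (n := k + 1) hM.dual hfE.2
      ?_).of_dual
    rw [dual_ground, insert_eq, ← hf, sdiff_union_of_subset hsub]

end IsTriadFan

/-! ### Fans of either type -/

lemma fanSet_eq_image (n : ℕ) (e : ℕ → α) : fanSet n e = (fun i => e (i + 1)) '' Iio n := by
  ext a
  constructor
  · rintro ⟨i, hi, hin, rfl⟩
    exact ⟨i - 1, by grind, by grind⟩
  · rintro ⟨i, hi, rfl⟩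
    exact ⟨i + 1, by omega, hi, rfl⟩

lemma posBool_not (b : Bool) (i : ℕ) : posBool (!b) i = !posBool b i :=
  (apply_ite Bool.not _ _ _).symm

lemma triOrTriad_dual_not {b : Bool} {T : Set α} :
    TriOrTriad M✶ (!b) T ↔ TriOrTriad M b T := by
  cases b
  · rfl
  · simp only [TriOrTriad, IsTriad, dual_dual, Bool.not_true, cond_false, cond_true]

lemma IsFanFun.dual {b : Bool} {n : ℕ} {e : ℕ → α} (h : IsFanFun M b n e) :
    IsFanFun M✶ (!b) n e := by
  refine ⟨h.1, h.2.1, h.2.2.1, fun i hi hin => ?_⟩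
  rw [posBool_not, triOrTriad_dual_not]
  exact h.2.2.2 i hi hin

lemma IsFanFun.isTriadFan {n : ℕ} {e : ℕ → α} (h : IsFanFun M false n e) :
    IsTriadFan M n (fun i => e (i + 1)) where
  injOn i hi j hj hij := by
    have := h.2.1 (i + 1) (j + 1) (by omega) hi (by omega) hj hij
    omega
  mem_ground i hi := h.2.2.1 _ (by omega) hi
  triad i hi he := by
    have := h.2.2.2 (i + 1) (by omega) (by omega)
    have hb : posBool false (i + 1) = false := by grind [posBool]
    rw [hb] at this
    exact this.1.1
  triangle i hi ho := by
    have := h.2.2.2 (i + 1) (by omega) (by omega)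
    have hb : posBool false (i + 1) = true := by grind [posBool]
    rw [hb] at this
    exact this.1.1

lemma IsFanFun.hasCyclicFan {b : Bool} {n : ℕ} {e' : ℕ → α} {e x y z : α} (h : IsFanFun M b n e')
    (hM : NoTwoSep M) (he : e ∉ fanSet n e') (hx : x ∈ fanSet n e') (hy : y ∈ fanSet n e')
    (hz : z ∈ fanSet n e') (hd : M.Dep {e, x, y}) (hd' : M✶.Dep {e, y, z}) : HasCyclicFan M := by
  rw [fanSet_eq_image] at he hx hy hz
  cases b
  · exact h.isTriadFan.hasCyclicFan hM h.1 he hx hy hz hd hd'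
  · exact (h.dual.isTriadFan.hasCyclicFan hM.dual h.1 he hz hy hx (pair_comm y z ▸ hd')
      (by rwa [dual_dual, pair_comm y x])).of_dual

end PaperDefs

/-- If some element outside a fan of the 3-connected matroid `M` lies in a triangle and
a triad whose remaining elements all belong to the fan, then `M` is a wheel or a whirl. -/
theorem statement12 (M : Matroid α) (hM3 : ThreeConn M) (hcard : 4 ≤ M.E.encard)
    (b : Bool) (n : ℕ) (e' : ℕ → α) (hfan : IsFanFun M b n e')
    (e : α) (he : e ∈ M.E) (heF : e ∉ fanSet n e')
    (x y z : α) (hx : x ∈ fanSet n e') (hy : y ∈ fanSet n e') (hz : z ∈ fanSet n e')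
    (htri : IsTriangle M {e, x, y}) (htriad : IsTriad M {e, y, z}) :
    IsWheel M ∨ IsWhirl M := by
  have hM := hM3.noTwoSep hcard
  exact (hfan.hasCyclicFan hM heF hx hy hz htri.1.1 htriad.1.1).isWheel_or_isWhirl hM
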